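/- Let q be a prime power and m ≥ 1 an integer, and suppose there exists a (2,1)-separating binary code B ⊆ F₂^m with |B| ≥ q. Then the asymptotic exponent ρ of binary (2,1)-separating codes satisfies ρ ≥ (log₂ q / m) · R_q, where R_q is the asymptotic maximal achievable rate for linear intersecting codes over F_q. -/

import Mathlib

/-!
The argument is concatenation. If `C` is linear intersecting over `F` and `x, y, z ∈ C` with
`y ≠ x` and `y ≠ z`, then the nonzero codewords `y - x` and `y - z` share a support coordinate
`i`, so `y i ∉ {x i, z i}`. Fix an injection `φ : F → B` and replace each symbol `a` by the block
`φ a`. Separation of `B` (or mere injectivity of `φ`, when `x i = z i`) gives a coordinate of the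
`i`-th block where the image of `y` differs from the images of both `x` and `z`. So the
concatenated code is separating, of length `n * m` and size `q ^ dim C`
(`card_pow_le_maxSepSize`). The bound on `rho` follows by restricting its limsup to the
multiples of `m`.
-/

/-- A code `C ⊆ Aⁿ` is `(2,1)`-separating if all pairwise distinct `x, y, z ∈ C`
satisfy the strict triangle inequality `d(x,z) < d(x,y) + d(y,z)` for the Hamming
distance. -/
def IsSeparating21 {ι A : Type*} [Fintype ι] [DecidableEq A] (C : Set (ι → A)) : Prop :=
  ∀ x ∈ C, ∀ y ∈ C, ∀ z ∈ C, x ≠ y → y ≠ z → x ≠ z →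
    hammingDist x z < hammingDist x y + hammingDist y z

/-- `M n`: the maximum size of a `(2,1)`-separating binary code of length `n`. -/
noncomputable def maxSepSize (n : ℕ) : ℕ :=
  sSup {m : ℕ | ∃ C : Set (Fin n → ZMod 2), IsSeparating21 C ∧ C.ncard = m}

/-- `ρ = limsup_{n → ∞} log₂ M(n) / n`, the asymptotic exponent of binary
`(2,1)`-separating codes. -/
noncomputable def rho : ℝ :=
  Filter.limsup (fun n : ℕ => Real.logb 2 (maxSepSize n) / n) Filter.atTop

/-- A linear code `C ⊆ Fⁿ` is intersecting if any two nonzero codewords have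
intersecting supports. -/
def IsLinIntersecting {F : Type*} [Field F] {n : ℕ} (C : Submodule F (Fin n → F)) : Prop :=
  ∀ c ∈ C, c ≠ 0 → ∀ c' ∈ C, c' ≠ 0 → ∃ i : Fin n, c i ≠ 0 ∧ c' i ≠ 0

/-- The maximum dimension of a linear intersecting code of length `n` over `F`. -/
noncomputable def maxIntersectingDim (F : Type*) [Field F] (n : ℕ) : ℕ :=
  sSup {k : ℕ | ∃ C : Submodule F (Fin n → F), IsLinIntersecting C ∧ Module.finrank F C = k}

/-- `R_q`: the asymptotic maximal achievable rate for linear intersecting codes over `F`. -/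
noncomputable def Rq (F : Type*) [Field F] : ℝ :=
  Filter.limsup (fun n : ℕ => (maxIntersectingDim F n : ℝ) / n) Filter.atTop

/-- The coordinatewise form of the strict triangle inequality for the Hamming distance. -/
lemma hammingDist_lt_add_iff {ι A : Type*} [Fintype ι] [DecidableEq A] (x y z : ι → A) :
    hammingDist x z < hammingDist x y + hammingDist y z ↔ ∃ i, y i ≠ x i ∧ y i ≠ z i := by
  classical
  simp only [hammingDist, Finset.card_filter, ← Finset.sum_add_distrib]
  constructor
  · intro h
    obtain ⟨i, -, hi⟩ := Finset.exists_lt_of_sum_lt h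
    exact ⟨i, by grind⟩
  · rintro ⟨i, h1, h2⟩
    refine Finset.sum_lt_sum (fun j _ => by grind) ⟨i, Finset.mem_univ i, by grind⟩

lemma bddAbove_sepSize (n : ℕ) :
    BddAbove {m : ℕ | ∃ C : Set (Fin n → ZMod 2), IsSeparating21 C ∧ C.ncard = m} := by
  refine ⟨2 ^ n, ?_⟩
  rintro _ ⟨C, -, rfl⟩
  have h := Set.ncard_le_card C
  simpa [Nat.card_eq_fintype_card, ZMod.card] using h

lemma maxSepSize_le (n : ℕ) : maxSepSize n ≤ 2 ^ n := by
  refine csSup_le' ?_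
  rintro _ ⟨C, -, rfl⟩
  have h := Set.ncard_le_card C
  simpa [Nat.card_eq_fintype_card, ZMod.card] using h

lemma exists_maxIntersecting (F : Type*) [Field F] (n : ℕ) :
    ∃ C : Submodule F (Fin n → F),
      IsLinIntersecting C ∧ Module.finrank F C = maxIntersectingDim F n := by
  refine Nat.sSup_mem
    (s := {k : ℕ | ∃ C : Submodule F (Fin n → F), IsLinIntersecting C ∧ Module.finrank F C = k})
    ⟨0, ⊥, ?_, finrank_bot _ _⟩ ⟨n, ?_⟩
  · intro c hc h0
    exact absurd ((Submodule.mem_bot F).1 hc) h0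
  · rintro _ ⟨C, -, rfl⟩
    simpa using Submodule.finrank_le C

/-- The size bound obtained by concatenating an optimal linear intersecting code with `B`. -/
lemma card_pow_le_maxSepSize (m : ℕ) (F : Type*) [Field F] [Fintype F]
    (B : Set (Fin m → ZMod 2)) (hB : IsSeparating21 B) (hBcard : Fintype.card F ≤ B.ncard)
    (n : ℕ) :
    Fintype.card F ^ maxIntersectingDim F n ≤ maxSepSize (n * m) := by
  classical
  obtain ⟨C, hC, hk⟩ := exists_maxIntersecting F n
  obtain ⟨φ⟩ : Nonempty (F ↪ B) := by
    refine Function.Embedding.nonempty_of_card_le ?_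
    rwa [← Nat.card_eq_fintype_card (α := B), Nat.card_coe_set_eq]
  have hφ : ∀ a b, (φ a : Fin m → ZMod 2) = φ b → a = b :=
    fun a b h => φ.injective (Subtype.ext h)
  -- For `y ∉ {x, z}`, the word `φ y` is separated from `φ x` and `φ z` even if `x = z`.
  have hsep : ∀ x y z : F, y ≠ x → y ≠ z →
      ∃ j, (φ y).1 j ≠ (φ x).1 j ∧ (φ y).1 j ≠ (φ z).1 j := by
    intro x y z hyx hyz
    by_cases hxz : x = z
    · subst hxz
      obtain ⟨j, hj⟩ := Function.ne_iff.1 (fun h => hyx (hφ _ _ h))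
      exact ⟨j, hj, hj⟩
    · exact (hammingDist_lt_add_iff _ _ _).1
        (hB _ (φ x).2 _ (φ y).2 _ (φ z).2 (fun h => hyx (hφ _ _ h).symm)
          (fun h => hyz (hφ _ _ h)) (fun h => hxz (hφ _ _ h)))
  let Φ : C → Fin (n * m) → ZMod 2 := fun c t =>
    (φ (c.1 (finProdFinEquiv.symm t).1)).1 (finProdFinEquiv.symm t).2
  have hΦ : ∀ (c : C) i j, Φ c (finProdFinEquiv (i, j)) = (φ (c.1 i)).1 j := by
    intro c i j
    simp only [Φ, Equiv.symm_apply_apply]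
  have hinj : Function.Injective Φ := by
    intro c d h
    refine Subtype.ext (funext fun i => hφ _ _ (funext fun j => ?_))
    rw [← hΦ, ← hΦ, h]
  refine le_csSup (bddAbove_sepSize _) ⟨Set.range Φ, ?_, ?_⟩
  · rintro _ ⟨x, rfl⟩ _ ⟨y, rfl⟩ _ ⟨z, rfl⟩ hxy hyz -
    rw [hammingDist_lt_add_iff]
    have h1 : y.1 - x.1 ≠ 0 := fun h => hxy (by rw [Subtype.ext (sub_eq_zero.1 h)])
    have h2 : y.1 - z.1 ≠ 0 := fun h => hyz (by rw [Subtype.ext (sub_eq_zero.1 h)])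
    obtain ⟨i, hi1, hi2⟩ := hC _ (C.sub_mem y.2 x.2) h1 _ (C.sub_mem y.2 z.2) h2
    obtain ⟨j, hj⟩ := hsep (x.1 i) (y.1 i) (z.1 i) (sub_ne_zero.1 hi1) (sub_ne_zero.1 hi2)
    exact ⟨finProdFinEquiv (i, j), by simpa only [hΦ] using hj⟩
  · rw [← Nat.card_coe_set_eq, Nat.card_range_of_injective hinj, ← hk,
      Module.natCard_eq_pow_finrank (K := F), Nat.card_eq_fintype_card]

/-- The sequence defining `rho` is bounded, so its real-valued limsup is not a junk value. -/
lemma logb_maxSepSize_div_le (n : ℕ) : Real.logb 2 (maxSepSize n) / n ≤ 1 := by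
  refine div_le_one_of_le₀ ?_ (Nat.cast_nonneg n)
  rcases Nat.eq_zero_or_pos (maxSepSize n) with h | h
  · simp [h]
  · rw [Real.logb_le_iff_le_rpow (by norm_num) (by exact_mod_cast h), Real.rpow_natCast]
    exact_mod_cast maxSepSize_le n

/-- If `q` is a prime power, `m ≥ 1`, and there is a `(2,1)`-separating binary code
`B ⊆ F₂ᵐ` with `|B| ≥ q`, then `ρ ≥ (log₂ q / m) · R_q`. -/
theorem rho_ge_concat
    (q m : ℕ) (hq : IsPrimePow q) (hm : 1 ≤ m)
    (F : Type*) [Field F] [Fintype F] (hF : Fintype.card F = q)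
    (B : Set (Fin m → ZMod 2)) (hB : IsSeparating21 B) (hBcard : q ≤ B.ncard) :
    (Real.logb 2 q / m) * Rq F ≤ rho := by
  have hm0 : (0 : ℝ) < m := by exact_mod_cast hm
  have hq1 : (1 : ℝ) < q := by exact_mod_cast hq.one_lt
  have hL : 0 < Real.logb 2 q / m := div_pos (Real.logb_pos (by norm_num) hq1) hm0
  refine le_of_forall_gt_imp_ge_of_dense fun a ha => ?_
  have hev := Filter.eventually_lt_of_limsup_lt ha
    (Filter.isBoundedUnder_of ⟨1, logb_maxSepSize_div_le⟩)
  have hev' := (Filter.tendsto_id.atTop_mul_const' (show 0 < m from hm)).eventually hev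
  rw [mul_comm, ← le_div_iff₀ hL]
  refine Filter.limsup_le_of_le
    (Filter.isBoundedUnder_of ⟨0, fun n => by positivity⟩).isCoboundedUnder_le ?_
  filter_upwards [hev'] with n hn
  rw [le_div_iff₀ hL]
  refine le_trans ?_ hn.le
  have hpow := card_pow_le_maxSepSize m F B hB (hF ▸ hBcard) n
  rw [hF] at hpow
  have hlog : maxIntersectingDim F n * Real.logb 2 q ≤ Real.logb 2 (maxSepSize (n * m)) := by
    rw [← Real.logb_pow]
    refine Real.logb_le_logb_of_le (by norm_num) (by positivity) ?_
    exact_mod_cast hpow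
  simp only [id]
  rw [div_mul_div_comm]
  push_cast
  gcongr
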